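/- Let I and Ĩ be finite types, t an odd natural number, and p : Ĩ → I a map each of whose fibers has exactly t elements; define π : (Ĩ → 𝔽₂) → (I → 𝔽₂) by (π x) i = ∑_{j ∈ p⁻¹(i)} x j and τ : (I → 𝔽₂) → (Ĩ → 𝔽₂) by (τ y) j = y (p j). Let (C_X, C_Z) be a CSS code on I → 𝔽₂ and (C̃_X, C̃_Z) a CSS code on Ĩ → 𝔽₂. Assume τ(C_X) ⊆ C̃_X, τ(C_Z) ⊆ C̃_Z, π(C̃_X^⊥) ⊆ C_X^⊥ and π(C̃_Z^⊥) ⊆ C_Z^⊥. Then: for every x ∈ C_X with x ∉ C_Z^⊥, the vector τ x lies in C̃_X, does not lie in C̃_Z^⊥, and has Hamming weight t times the Hamming weight of x; and for every x ∈ C_Z with x ∉ C_X^⊥, the vector τ x lies in C̃_Z, does not lie in C̃_X^⊥, and has Hamming weight t times that of x. Consequently the minimum Hamming weight over C̃_X \ C̃_Z^⊥ is at most t times the minimum over C_X \ C_Z^⊥, and likewise with X and Z exchanged; i.e., the lifted CSS code's distances satisfy d̃_Z ≤ t·d_Z and d̃_X ≤ t·d_X, hence d̃ ≤ t·d. -/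

import Mathlib

/-!
The composite `π ∘ τ` is multiplication by the common fiber size `t`, hence the identity over `𝔽₂`
because `t` is odd. If `τ x` lay in the dual of the lifted code, then `x = π (τ x)` would lie in the
dual of the base code; so `τ` sends logical representatives to logical representatives. Since the
support of `τ x` is the preimage under `p` of the support of `x`, the weight is multiplied by `t`,
and the distance bounds follow on taking infima.
-/

/-- The fiberwise-sum map `π : (Ĩ → 𝔽₂) → (I → 𝔽₂)`, `(π x) i = ∑_{j ∈ p⁻¹(i)} x j`. -/
def fiberSum {I J : Type*} [Fintype J] [DecidableEq I] (p : J → I) :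
    (J → ZMod 2) →ₗ[ZMod 2] (I → ZMod 2) where
  toFun x := fun i => ∑ j ∈ Finset.univ.filter (fun j => p j = i), x j
  map_add' x y := by
    funext i
    simp [Finset.sum_add_distrib]
  map_smul' c x := by
    funext i
    simp [Finset.mul_sum]

/-- The pullback map `τ : (I → 𝔽₂) → (Ĩ → 𝔽₂)`, `(τ y) j = y (p j)`. -/
def pullback' {I J : Type*} (p : J → I) :
    (I → ZMod 2) →ₗ[ZMod 2] (J → ZMod 2) where
  toFun y := fun j => y (p j)
  map_add' _ _ := rfl
  map_smul' _ _ := rfl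

/-- The dual code of a linear code `C ⊆ I → 𝔽₂` with respect to the standard dot product. -/
def dualCode {I : Type*} [Fintype I] (C : Submodule (ZMod 2) (I → ZMod 2)) :
    Submodule (ZMod 2) (I → ZMod 2) where
  carrier := {x | ∀ c ∈ C, ∑ i, x i * c i = 0}
  zero_mem' := by intro c hc; simp
  add_mem' := by
    intro x y hx hy c hc
    simp [add_mul, Finset.sum_add_distrib, hx c hc, hy c hc]
  smul_mem' := by
    intro a x hx c hc
    simp only [Pi.smul_apply, smul_eq_mul, mul_assoc, ← Finset.mul_sum]
    rw [hx c hc, mul_zero]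

/-- The minimum Hamming weight (in `ℕ∞`, so `⊤` for the empty set) over `C \ N`. -/
noncomputable def minWeight {I : Type*} [Fintype I]
    (C N : Submodule (ZMod 2) (I → ZMod 2)) : ℕ∞ :=
  sInf {w : ℕ∞ | ∃ x, x ∈ C ∧ x ∉ N ∧ w = (hammingNorm x : ℕ∞)}

theorem fiberSum_pullback' {I J : Type*} [Fintype J] [DecidableEq I] {t : ℕ} (ht : Odd t)
    (p : J → I) (hfib : ∀ i : I, (Finset.univ.filter (fun j => p j = i)).card = t)
    (x : I → ZMod 2) : fiberSum p (pullback' p x) = x := by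
  funext i
  change ∑ j ∈ Finset.univ.filter (fun j => p j = i), x (p j) = x i
  rw [Finset.sum_congr rfl (g := fun _ => x i)
    (fun j hj => by rw [(Finset.mem_filter.mp hj).2]),
    Finset.sum_const, hfib, nsmul_eq_mul, ZMod.natCast_eq_one_iff_odd.mpr ht, one_mul]

theorem hammingNorm_pullback' {I J : Type*} [Fintype I] [Fintype J] [DecidableEq I] {t : ℕ}
    (p : J → I) (hfib : ∀ i : I, (Finset.univ.filter (fun j => p j = i)).card = t)
    (x : I → ZMod 2) : hammingNorm (pullback' p x) = t * hammingNorm x := by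
  unfold hammingNorm
  rw [Finset.card_eq_sum_card_fiberwise (f := p) (t := Finset.univ.filter (fun i => x i ≠ 0)),
    Finset.sum_const_nat (m := t), mul_comm]
  · intro i hi
    rw [← hfib i, Finset.filter_filter]
    congr 1
    ext j
    simp only [Finset.mem_filter, Finset.mem_univ, true_and] at hi ⊢
    exact ⟨fun h => h.2, fun h => ⟨by subst h; exact hi, h⟩⟩
  · intro j hj
    simp only [Finset.coe_filter, Finset.mem_univ, true_and, Set.mem_ofPred_eq] at hj ⊢
    exact hj

/-- A map `C \ N → D \ M` that multiplies weights by `t` bounds the minimum weight over `D \ M`.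
The condition `t ≠ 0` is needed when `C \ N` is empty, since `0 * ⊤ = 0` in `ℕ∞`. -/
theorem minWeight_le_mul {I J : Type*} [Fintype I] [Fintype J] {t : ℕ} (ht : t ≠ 0)
    {C N : Submodule (ZMod 2) (I → ZMod 2)} {D M : Submodule (ZMod 2) (J → ZMod 2)}
    (f : (I → ZMod 2) → (J → ZMod 2))
    (h : ∀ x ∈ C, x ∉ N → f x ∈ D ∧ f x ∉ M ∧ hammingNorm (f x) = t * hammingNorm x) :
    minWeight D M ≤ (t : ℕ∞) * minWeight C N := by
  rcases Set.eq_empty_or_nonempty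
    {w : ℕ∞ | ∃ x, x ∈ C ∧ x ∉ N ∧ w = (hammingNorm x : ℕ∞)} with he | hne
  · have : minWeight C N = ⊤ := by rw [minWeight, he, sInf_empty]
    rw [this, ENat.mul_top (by exact_mod_cast ht)]
    exact le_top
  · obtain ⟨x, hx, hxN, hw⟩ := csInf_mem hne
    obtain ⟨h1, h2, h3⟩ := h x hx hxN
    change _ ≤ (t : ℕ∞) * sInf _
    rw [hw]
    exact sInf_le ⟨f x, h1, h2, by rw [h3]; push_cast; rfl⟩

/-- Distance upper bound for lifted CSS codes: for a Galois lift of odd index `t`, the pullback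
of a logical representative is a logical representative of `t` times the weight; consequently
`d̃_Z ≤ t·d_Z`, `d̃_X ≤ t·d_X`, and `d̃ ≤ t·d`. -/
theorem cssLift_distance_upper_bound
    {I J : Type*} [Fintype I] [Fintype J] [DecidableEq I]
    (t : ℕ) (ht : Odd t) (p : J → I)
    (hfib : ∀ i : I, (Finset.univ.filter (fun j => p j = i)).card = t)
    (CX CZ : Submodule (ZMod 2) (I → ZMod 2))
    (CXt CZt : Submodule (ZMod 2) (J → ZMod 2))
    (hCSS : dualCode CX ≤ CZ)
    (hCSSt : dualCode CXt ≤ CZt)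
    (hτX : ∀ x ∈ CX, pullback' p x ∈ CXt)
    (hτZ : ∀ x ∈ CZ, pullback' p x ∈ CZt)
    (hπX : ∀ x ∈ dualCode CXt, fiberSum p x ∈ dualCode CX)
    (hπZ : ∀ x ∈ dualCode CZt, fiberSum p x ∈ dualCode CZ) :
    (∀ x ∈ CX, x ∉ dualCode CZ →
      pullback' p x ∈ CXt ∧ pullback' p x ∉ dualCode CZt ∧
        hammingNorm (pullback' p x) = t * hammingNorm x) ∧
    (∀ x ∈ CZ, x ∉ dualCode CX →
      pullback' p x ∈ CZt ∧ pullback' p x ∉ dualCode CXt ∧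
        hammingNorm (pullback' p x) = t * hammingNorm x) ∧
    minWeight CXt (dualCode CZt) ≤ (t : ℕ∞) * minWeight CX (dualCode CZ) ∧
    minWeight CZt (dualCode CXt) ≤ (t : ℕ∞) * minWeight CZ (dualCode CX) ∧
    min (minWeight CZt (dualCode CXt)) (minWeight CXt (dualCode CZt)) ≤
      (t : ℕ∞) * min (minWeight CZ (dualCode CX)) (minWeight CX (dualCode CZ)) := by
  have ht0 : t ≠ 0 := by rintro rfl; simp at ht
  have hX : ∀ x ∈ CX, x ∉ dualCode CZ → pullback' p x ∈ CXt ∧ pullback' p x ∉ dualCode CZt ∧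
      hammingNorm (pullback' p x) = t * hammingNorm x := fun x hx hxn =>
    ⟨hτX x hx, fun hc => hxn (by simpa only [fiberSum_pullback' ht p hfib] using hπZ _ hc),
      hammingNorm_pullback' p hfib x⟩
  have hZ : ∀ x ∈ CZ, x ∉ dualCode CX → pullback' p x ∈ CZt ∧ pullback' p x ∉ dualCode CXt ∧
      hammingNorm (pullback' p x) = t * hammingNorm x := fun x hx hxn =>
    ⟨hτZ x hx, fun hc => hxn (by simpa only [fiberSum_pullback' ht p hfib] using hπX _ hc),
      hammingNorm_pullback' p hfib x⟩
  have hdZ := minWeight_le_mul ht0 (pullback' p) hX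
  have hdX := minWeight_le_mul ht0 (pullback' p) hZ
  refine ⟨hX, hZ, hdZ, hdX, ?_⟩
  rcases min_choice (minWeight CZ (dualCode CX)) (minWeight CX (dualCode CZ)) with h | h <;> rw [h]
  · exact (min_le_left _ _).trans hdX
  · exact (min_le_right _ _).trans hdZ
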